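/- For every natural number n ≥ 1, the finite power R_S^n of the Sorgenfrey line and the finite power I_S^n of the irrational Sorgenfrey line have a π-tree. -/

import Mathlib

open Set

universe u v

/-- A family `γ` π-refines `δ`: every nonempty member of `δ` contains a
nonempty member of `γ`. -/
def PiRefines {α : Type*} (γ δ : Set (Set α)) : Prop :=
  ∀ D ∈ δ, D.Nonempty → ∃ G ∈ γ, G.Nonempty ∧ G ⊆ D

/-- The finite intersection property. -/
def HasFIP {α : Type*} (γ : Set (Set α)) : Prop :=
  ∀ δ : Set (Set α), δ ⊆ γ → δ.Finite → δ.Nonempty → (⋂₀ δ).Nonempty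

/-- `cofin A` is the family of complements in `A` of finite subsets of `A`. -/
def cofin (A : Set ℕ) : Set (Set ℕ) :=
  {B | ∃ C : Set ℕ, C.Finite ∧ C ⊆ A ∧ B = A \ C}

/-- A foliage tree on `X`: a set-theoretic tree (strict partial order with
well-ordered sets of strict predecessors) with a leaf (a subset of `X`)
attached to each node. -/
structure FoliageTree (X : Type u) where
  Node : Type
  lt : Node → Node → Prop
  lt_irrefl : ∀ a, ¬ lt a a
  lt_trans : ∀ {a b c}, lt a b → lt b c → lt a c
  wellOrdered : ∀ a : Node, IsWellOrder {b : Node // lt b a} fun x y => lt x.1 y.1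
  leaf : Node → Set X

/-- Strict proper-extension order on finite sequences of naturals. -/
def seqLT (a b : List ℕ) : Prop := a <+: b ∧ a ≠ b

namespace FoliageTree

variable {X : Type u}

/-- The sons (immediate successors) of a node. -/
def Sons (F : FoliageTree X) (x : F.Node) : Set F.Node :=
  {s | F.lt x s ∧ ¬ ∃ t, F.lt x t ∧ F.lt t s}

/-- A node is maximal if it has no strict successor. -/
def IsMaxNode (F : FoliageTree X) (x : F.Node) : Prop := ¬ ∃ s, F.lt x s

/-- A chain of nodes. -/
def IsChainN (F : FoliageTree X) (C : Set F.Node) : Prop :=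
  ∀ x ∈ C, ∀ y ∈ C, F.lt x y ∨ x = y ∨ F.lt y x

/-- A branch is a maximal chain. -/
def IsBranch (F : FoliageTree X) (B : Set F.Node) : Prop :=
  F.IsChainN B ∧ ∀ C, F.IsChainN C → B ⊆ C → B = C

/-- The height of a node: the order type of its set of strict predecessors. -/
noncomputable def height (F : FoliageTree X) (v : F.Node) : Ordinal :=
  @Ordinal.type {b : F.Node // F.lt b v} (fun x y => F.lt x.1 y.1) (F.wellOrdered v)

/-- `shoot F v`: unions of leaves over cofinite sets of sons of `v`. -/
def shoot (F : FoliageTree X) (v : F.Node) : Set (Set X) :=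
  {S | ∃ C : Set F.Node, C ⊆ F.Sons v ∧ (F.Sons v \ C).Finite ∧ S = ⋃ s ∈ C, F.leaf s}

/-- `scope F p`: the nodes whose leaf contains `p`. -/
def scope (F : FoliageTree X) (p : X) : Set F.Node := {x | p ∈ F.leaf x}

/-- The union of all leaves. -/
def flesh (F : FoliageTree X) : Set X := ⋃ x, F.leaf x

/-- `F` is a foliage `ω,ω`-tree: its skeleton is order-isomorphic to
`(ω^{<ω}, ⊂)`. -/
def IsOmegaOmegaTree (F : FoliageTree X) : Prop := Nonempty (F.lt ≃r seqLT)

/-- `F` is locally strict: the leaf of every non-maximal node is the disjoint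
union of the leaves of its sons. -/
def LocallyStrict (F : FoliageTree X) : Prop :=
  ∀ x, ¬ F.IsMaxNode x →
    F.leaf x = (⋃ s ∈ F.Sons x, F.leaf s) ∧
      ∀ s ∈ F.Sons x, ∀ t ∈ F.Sons x, s ≠ t → Disjoint (F.leaf s) (F.leaf t)

/-- `F` has strict branches: it has nodes, and along every branch the
intersection of the leaves is a singleton. -/
def StrictBranches (F : FoliageTree X) : Prop :=
  Nonempty F.Node ∧ ∀ B, F.IsBranch B → ∃ p, (⋂ x ∈ B, F.leaf x) = {p}

/-- `r` is the root: the least node. -/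
def IsRoot (F : FoliageTree X) (r : F.Node) : Prop := ∀ x, r = x ∨ F.lt r x

/-- All leaves are open. -/
def OpenIn [TopologicalSpace X] (F : FoliageTree X) : Prop := ∀ x, IsOpen (F.leaf x)

/-- `F` is a Baire foliage tree on `X`. -/
def IsBaireFoliageTree [TopologicalSpace X] (F : FoliageTree X) : Prop :=
  F.OpenIn ∧ F.LocallyStrict ∧ F.IsOmegaOmegaTree ∧ F.StrictBranches ∧
    ∃ r, F.IsRoot r ∧ F.leaf r = Set.univ

/-- `F` grows into `X`. -/
def GrowsInto [TopologicalSpace X] (F : FoliageTree X) : Prop :=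
  ∀ p : X, ∀ U ∈ nhds p, ∃ z ∈ F.scope p, PiRefines (F.shoot z) {U}

/-- `F` is a π-tree on `X`. -/
def IsPiTree [TopologicalSpace X] (F : FoliageTree X) : Prop :=
  F.IsBaireFoliageTree ∧ F.GrowsInto

/-- `rise F p U`: the set of (finite) heights of nodes `v` whose leaf contains
`p` and whose shoot π-refines `{U}`. -/
noncomputable def rise (F : FoliageTree X) (p : X) (U : Set X) : Set ℕ :=
  {n | ∃ v ∈ F.scope p, PiRefines (F.shoot v) {U} ∧ F.height v = (n : Ordinal)}

/-- `Rise F`: all sets `rise F p U` for `p ∈ X` and `U` a neighbourhood of `p`. -/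
def Rise [TopologicalSpace X] (F : FoliageTree X) : Set (Set ℕ) :=
  {R | ∃ p U, U ∈ nhds p ∧ R = F.rise p U}

end FoliageTree

/-- The Sorgenfrey line: the reals with the topology generated by the
half-open intervals `[a, b)`. -/
def SorgLine : Type := ℝ

instance : TopologicalSpace SorgLine :=
  TopologicalSpace.generateFrom {s : Set ℝ | ∃ a b : ℝ, s = Set.Ico a b}

/-- The set of irrational points of the Sorgenfrey line; the irrational
Sorgenfrey line is the corresponding subspace. -/
def IrrSorg : Set SorgLine := {x : SorgLine | Irrational (show ℝ from x)}

open Filter Topology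

/-!
A continuous bijection `X → ω^ω` makes a Baire foliage tree on `X` out of the sets of points whose
codes begin with a given finite sequence. It grows into `X` as soon as every neighbourhood `U` of
every point `p` has a level at which the points that still agree with `p`, and whose next term is
large, all lie in `U`.

To pass to finite powers, let the codes be sequences of pairs of which only the first components
must be large, and let this work at all large levels, so that the factors have a level in common.
The `n` pairs at each level are recoded as a single pair whose first component is the minimum of
the `n` first components: if it is large, then so are all of them. The second component enumerates
the fibres of the minimum, which are infinite even for `n = 1` thanks to the second components.

A point `x` of the line is coded by `⌊x⌋` and the expansion of `u = ⌊x⌋ + 1 - x`. Enlarging a digit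
of `u` lowers `u`, that is, moves `x` to the right, into the basic neighbourhoods `[x, x + ε)`. For
all reals the expansion lists the gaps between the binary digits `1` of `u`. For irrationals it is
the continued fraction; there the order alternates, and only every second term, the first component
of a pair, is required to be large.
-/

section InitialSegments

/-- The finite sequence `⟨f 0, …, f (m - 1)⟩`, a node of the tree `ω^{<ω}`. -/
def initSeg (f : ℕ → ℕ) (m : ℕ) : List ℕ := (List.range m).map f

@[simp] theorem length_initSeg (f : ℕ → ℕ) (m : ℕ) : (initSeg f m).length = m := by
  simp [initSeg]

theorem initSeg_succ (f : ℕ → ℕ) (m : ℕ) : initSeg f (m + 1) = initSeg f m ++ [f m] := by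
  simp [initSeg, List.range_succ]

theorem initSeg_eq_initSeg_iff_mem_cylinder {f g : ℕ → ℕ} {m : ℕ} :
    initSeg g m = initSeg f m ↔ g ∈ PiNat.cylinder f m := by
  simp [initSeg, PiNat.mem_cylinder_iff]

theorem initSeg_length_eq_iff {f : ℕ → ℕ} {s : List ℕ} :
    initSeg f s.length = s ↔ ∀ i (hi : i < s.length), s[i] = f i := by
  simp [List.ext_getElem_iff, initSeg, eq_comm]

theorem initSeg_prefix_of_le (f : ℕ → ℕ) {m n : ℕ} (h : m ≤ n) : initSeg f m <+: initSeg f n := by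
  rw [List.prefix_iff_eq_take, length_initSeg, initSeg, initSeg, ← List.map_take, List.take_range,
    min_eq_left h]

theorem seqLT.length_lt {a b : List ℕ} (h : seqLT a b) : a.length < b.length :=
  h.1.length_le.lt_of_ne fun hlen => h.2 (h.1.eq_of_length hlen)

theorem seqLT_of_prefix_of_length_lt {a b : List ℕ} (h : a <+: b) (hlen : a.length < b.length) :
    seqLT a b :=
  ⟨h, fun hab => hlen.ne (congrArg List.length hab)⟩

theorem seqLT_append_singleton (s : List ℕ) (k : ℕ) : seqLT s (s ++ [k]) :=
  seqLT_of_prefix_of_length_lt (List.prefix_append s [k]) (by simp)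

theorem seqLT.trans {a b c : List ℕ} (hab : seqLT a b) (hbc : seqLT b c) : seqLT a c :=
  seqLT_of_prefix_of_length_lt (hab.1.trans hbc.1) (hab.length_lt.trans hbc.length_lt)

theorem isWellOrder_seqLT_predecessors (a : List ℕ) :
    IsWellOrder {b : List ℕ // seqLT b a} fun x y => seqLT x.1 y.1 where
  wf := Subrelation.wf (fun h => h.length_lt)
    (InvImage.wf (fun b : {b : List ℕ // seqLT b a} => b.1.length) Nat.lt_wfRel.wf)
  trichotomous := by
    intro x y hxy hyx
    refine Subtype.ext (by_contra fun hne => ?_)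
    rcases List.prefix_or_prefix_of_prefix x.2.1 y.2.1 with h | h
    · exact hxy ⟨h, hne⟩
    · exact hyx ⟨h, Ne.symm hne⟩

end InitialSegments

section CodeLeaf

variable {X : Type u} (ψ : X → ℕ → ℕ)

/-- The points whose code under `ψ : X → ω^ω` begins with the finite sequence `s`. -/
def codeLeaf (s : List ℕ) : Set X := {x | initSeg (ψ x) s.length = s}

variable {ψ}

theorem mem_codeLeaf_initSeg {f : ℕ → ℕ} {m : ℕ} {x : X} :
    x ∈ codeLeaf ψ (initSeg f m) ↔ ψ x ∈ PiNat.cylinder f m := by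
  rw [codeLeaf, mem_ofPred_eq, length_initSeg, initSeg_eq_initSeg_iff_mem_cylinder]

theorem mem_codeLeaf_append_singleton {s : List ℕ} {k : ℕ} {x : X} :
    x ∈ codeLeaf ψ (s ++ [k]) ↔ x ∈ codeLeaf ψ s ∧ ψ x s.length = k := by
  simp only [codeLeaf, mem_ofPred_eq, List.length_append, List.length_singleton, initSeg_succ,
    List.append_eq_append_iff_of_size_eq_left (length_initSeg _ _), List.cons.injEq, and_true]

theorem codeLeaf_eq_iUnion (s : List ℕ) : codeLeaf ψ s = ⋃ k, codeLeaf ψ (s ++ [k]) := by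
  ext x
  simp [mem_codeLeaf_append_singleton]

theorem disjoint_codeLeaf_append_singleton (s : List ℕ) {k l : ℕ} (hkl : k ≠ l) :
    Disjoint (codeLeaf ψ (s ++ [k])) (codeLeaf ψ (s ++ [l])) :=
  disjoint_left.2 fun _ hk hl => hkl <|
    (mem_codeLeaf_append_singleton.1 hk).2.symm.trans (mem_codeLeaf_append_singleton.1 hl).2

theorem iInter_codeLeaf_initSeg (f : ℕ → ℕ) : ⋂ m, codeLeaf ψ (initSeg f m) = ψ ⁻¹' {f} := by
  ext x
  simp only [mem_iInter, mem_codeLeaf_initSeg, mem_preimage, mem_singleton_iff]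
  refine ⟨fun h => funext fun i => h (i + 1) i i.lt_succ_self, ?_⟩
  rintro rfl m
  exact PiNat.self_mem_cylinder _ m

theorem isOpen_codeLeaf [TopologicalSpace X] (hψ : Continuous ψ) (s : List ℕ) :
    IsOpen (codeLeaf ψ s) := by
  have hs : initSeg (fun i => s.getD i 0) s.length = s :=
    initSeg_length_eq_iff.2 fun i hi => (List.getD_eq_getElem s 0 hi).symm
  have hcyl : codeLeaf ψ s = ψ ⁻¹' PiNat.cylinder (fun i => s.getD i 0) s.length := by
    rw [← hs]
    exact ext fun _ => by rw [mem_codeLeaf_initSeg, hs, mem_preimage]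
  exact hcyl ▸ (PiNat.isOpen_cylinder _ _ _).preimage hψ

end CodeLeaf

namespace FoliageTree

variable {X : Type u} {ψ : X → ℕ → ℕ}

/-- The foliage tree on `ω^{<ω}` determined by a coding `ψ` of the points of `X` by sequences of
natural numbers: the leaf at `s` is the set of points whose code begins with `s`. -/
def codeTree (ψ : X → ℕ → ℕ) : FoliageTree X where
  Node := List ℕ
  lt := seqLT
  lt_irrefl _ h := h.2 rfl
  lt_trans := seqLT.trans
  wellOrdered := isWellOrder_seqLT_predecessors
  leaf := codeLeaf ψ

theorem codeTree_sons (s : List ℕ) : (codeTree ψ).Sons s = range fun k : ℕ => s ++ [k] := by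
  ext t
  constructor
  · rintro ⟨⟨⟨r, rfl⟩, hne⟩, hmin⟩
    obtain _ | ⟨k, r⟩ := r
    · exact (hne (List.append_nil s).symm).elim
    rcases eq_or_ne r [] with rfl | hr
    · exact ⟨k, rfl⟩
    · refine (hmin ⟨s ++ [k], seqLT_append_singleton s k, ?_⟩).elim
      exact seqLT_of_prefix_of_length_lt ⟨r, by simp⟩ (by simp [List.length_pos_iff.2 hr])
  · rintro ⟨k, rfl⟩
    refine ⟨seqLT_append_singleton s k, fun ⟨t, hst, htk⟩ => ?_⟩
    have hlt := seqLT.length_lt hst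
    have hle := seqLT.length_lt htk
    rw [List.length_append, List.length_singleton] at hle
    omega

theorem codeTree_locallyStrict : (codeTree ψ).LocallyStrict := by
  intro (s : List ℕ) _
  rw [codeTree_sons s]
  refine ⟨?_, ?_⟩
  · exact (codeLeaf_eq_iUnion s).trans (biUnion_range (g := codeLeaf ψ)).symm
  · rintro _ ⟨k, rfl⟩ _ ⟨l, rfl⟩ hkl
    exact disjoint_codeLeaf_append_singleton s fun h => hkl (h ▸ rfl)

theorem isChainN_range_initSeg (f : ℕ → ℕ) : (codeTree ψ).IsChainN (range (initSeg f)) := by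
  rintro _ ⟨m, rfl⟩ _ ⟨n, rfl⟩
  rcases lt_trichotomy m n with h | rfl | h
  · exact Or.inl (seqLT_of_prefix_of_length_lt (initSeg_prefix_of_le f h.le) (by simpa))
  · exact Or.inr (Or.inl rfl)
  · exact Or.inr (Or.inr (seqLT_of_prefix_of_length_lt (initSeg_prefix_of_le f h.le) (by simpa)))

theorem exists_initSeg_eq_of_isChainN {B : Set (List ℕ)} (hB : (codeTree ψ).IsChainN B) :
    ∃ f : ℕ → ℕ, ∀ s ∈ B, initSeg f s.length = s := by
  have getElem_eq {s t : List ℕ} (hs : s ∈ B) (ht : t ∈ B) {i : ℕ} (his : i < s.length)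
      (hit : i < t.length) : s[i] = t[i] := by
    rcases hB s hs t ht with h | rfl | h
    · exact h.1.getElem his
    · rfl
    · exact (h.1.getElem hit).symm
  have (i : ℕ) : ∃ k, ∀ s ∈ B, ∀ hi : i < s.length, s[i] = k := by
    by_cases h : ∃ t ∈ B, i < t.length
    · obtain ⟨t, ht, hit⟩ := h
      exact ⟨t[i], fun s hs his => getElem_eq hs ht his hit⟩
    · exact ⟨0, fun s hs his => (h ⟨s, hs, his⟩).elim⟩
  choose f hf using this
  exact ⟨f, fun s hs => initSeg_length_eq_iff.2 fun i => hf i s hs⟩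

theorem exists_eq_range_initSeg_of_isBranch {B : Set (List ℕ)} (hB : (codeTree ψ).IsBranch B) :
    ∃ f : ℕ → ℕ, B = range (initSeg f) := by
  obtain ⟨f, hf⟩ := exists_initSeg_eq_of_isChainN hB.1
  exact ⟨f, hB.2 _ (isChainN_range_initSeg f) fun s hs => ⟨s.length, hf s hs⟩⟩

theorem codeTree_strictBranches (hψ : Function.Bijective ψ) : (codeTree ψ).StrictBranches := by
  refine ⟨⟨([] : List ℕ)⟩, fun B hB => ?_⟩
  obtain ⟨f, rfl⟩ := exists_eq_range_initSeg_of_isBranch hB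
  obtain ⟨p, rfl⟩ := hψ.surjective f
  refine ⟨p, (biInter_range (g := codeLeaf ψ)).trans ?_⟩
  rw [iInter_codeLeaf_initSeg, ← image_singleton, preimage_image_eq _ hψ.injective]

theorem biUnion_codeLeaf_mem_shoot (s : List ℕ) (K : ℕ) :
    ⋃ k ≥ K, codeLeaf ψ (s ++ [k]) ∈ (codeTree ψ).shoot s := by
  refine ⟨(fun k => s ++ [k]) '' Ici K, ?_, ?_, (biUnion_image (g := codeLeaf ψ)).symm⟩
  · exact codeTree_sons (ψ := ψ) s ▸ image_subset_range _ _
  · rw [codeTree_sons]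
    refine ((finite_Iio K).image fun k => s ++ [k]).subset ?_
    rintro _ ⟨⟨k, rfl⟩, hk⟩
    exact ⟨k, not_le.1 fun h : K ≤ k => hk ⟨k, h, rfl⟩, rfl⟩

variable [TopologicalSpace X]

theorem codeTree_isBaireFoliageTree (hψ : Function.Bijective ψ) (hcont : Continuous ψ) :
    (codeTree ψ).IsBaireFoliageTree := by
  refine ⟨isOpen_codeLeaf hcont, codeTree_locallyStrict, ⟨RelIso.refl seqLT⟩,
    codeTree_strictBranches hψ, ([] : List ℕ), fun s => ?_, eq_univ_of_forall fun _ => rfl⟩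
  rcases eq_or_ne s ([] : List ℕ) with rfl | hs
  · exact Or.inl rfl
  · exact Or.inr ⟨List.nil_prefix, hs.symm⟩

theorem codeTree_growsInto (hψ : Function.Surjective ψ)
    (hgrow : ∀ p, ∀ U ∈ nhds p, ∃ m K, ∀ x, ψ x ∈ PiNat.cylinder (ψ p) m → K ≤ ψ x m → x ∈ U) :
    (codeTree ψ).GrowsInto := by
  intro p U hU
  obtain ⟨m, K, hK⟩ := hgrow p U hU
  refine ⟨initSeg (ψ p) m, mem_codeLeaf_initSeg.2 (PiNat.self_mem_cylinder _ m), ?_⟩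
  rintro _ rfl -
  refine ⟨_, biUnion_codeLeaf_mem_shoot _ K, ?_, ?_⟩
  · obtain ⟨x, hx⟩ := hψ (Function.update (ψ p) m K)
    refine ⟨x, mem_iUnion₂.2 ⟨K, le_rfl, mem_codeLeaf_append_singleton.2 ⟨?_, ?_⟩⟩⟩
    · rw [mem_codeLeaf_initSeg, hx]
      exact PiNat.update_mem_cylinder (E := fun _ => ℕ) _ m K
    · rw [hx, length_initSeg, Function.update_self]
  · refine iUnion₂_subset fun k hk x hx => ?_
    obtain ⟨hcyl, rfl⟩ := mem_codeLeaf_append_singleton.1 hx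
    rw [length_initSeg] at hk
    exact hK x (mem_codeLeaf_initSeg.1 hcyl) hk

theorem codeTree_isPiTree (hψ : Function.Bijective ψ) (hcont : Continuous ψ)
    (hgrow : ∀ p, ∀ U ∈ nhds p, ∃ m K, ∀ x, ψ x ∈ PiNat.cylinder (ψ p) m → K ≤ ψ x m → x ∈ U) :
    (codeTree ψ).IsPiTree :=
  ⟨codeTree_isBaireFoliageTree hψ hcont, codeTree_growsInto hψ.surjective hgrow⟩

end FoliageTree

section Interleave

variable {α : Type*}

/-- A sequence of pairs read as a single sequence: the first components occupy the even positions,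
the second components the odd ones. -/
def interleave (α : Type*) : (ℕ → α × α) ≃ (ℕ → α) :=
  (Equiv.arrowProdEquivProdArrow ℕ (fun _ => α) fun _ => α).trans <|
    (Equiv.sumArrowEquivProdArrow ℕ ℕ α).symm.trans <|
      Equiv.natSumNatEquivNat.arrowCongr (Equiv.refl α)

theorem interleave_two_mul (f : ℕ → α × α) (m : ℕ) : interleave α f (2 * m) = (f m).1 := by
  have h : Equiv.natSumNatEquivNat.symm (2 * m) = Sum.inl m :=
    Equiv.natSumNatEquivNat.symm_apply_eq.2 (by simp)
  simp [interleave, h]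

theorem interleave_two_mul_add_one (f : ℕ → α × α) (m : ℕ) :
    interleave α f (2 * m + 1) = (f m).2 := by
  have h : Equiv.natSumNatEquivNat.symm (2 * m + 1) = Sum.inr m :=
    Equiv.natSumNatEquivNat.symm_apply_eq.2 (by simp)
  simp [interleave, h]

theorem continuous_interleave [TopologicalSpace α] : Continuous (interleave α) := by
  refine continuous_pi fun i => ?_
  obtain ⟨m, rfl | rfl⟩ := i.even_or_odd'
  · simpa only [interleave_two_mul] using (continuous_apply m).fst
  · simpa only [interleave_two_mul_add_one] using (continuous_apply m).snd

theorem mem_cylinder_of_interleave_mem_cylinder {f g : ℕ → α × α} {m : ℕ}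
    (h : interleave α g ∈ PiNat.cylinder (interleave α f) (2 * m)) : g ∈ PiNat.cylinder f m := by
  intro i hi
  have heven := h (2 * i) (by omega)
  have hodd := h (2 * i + 1) (by omega)
  rw [interleave_two_mul, interleave_two_mul] at heven
  rw [interleave_two_mul_add_one, interleave_two_mul_add_one] at hodd
  exact Prod.ext heven hodd

end Interleave

/-- A continuous bijective coding of `X` by sequences of pairs such that, near every point `p`,
large first components of the `m`-th pair force a point sharing `m` pairs with `p` into a given
neighbourhood of `p`, for all large `m`. The second components are there to leave room for
products, see `exists_equiv_nat_prod_nat_fst_le`. -/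
structure IsPiCode {X : Type u} [TopologicalSpace X] (φ : X ≃ (ℕ → ℕ × ℕ)) : Prop where
  continuous : Continuous φ
  grows : ∀ p, ∀ U ∈ 𝓝 p, ∀ᶠ m in atTop,
    ∃ K, ∀ x, φ x ∈ PiNat.cylinder (φ p) m → K ≤ (φ x m).1 → x ∈ U

theorem IsPiCode.exists_isPiTree {X : Type u} [TopologicalSpace X] {φ : X ≃ (ℕ → ℕ × ℕ)}
    (hφ : IsPiCode φ) : ∃ F : FoliageTree X, F.IsPiTree := by
  refine ⟨_, FoliageTree.codeTree_isPiTree (φ.trans (interleave ℕ)).bijective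
    (continuous_interleave.comp hφ.continuous) fun p U hU => ?_⟩
  obtain ⟨m, K, hK⟩ := (hφ.grows p U hU).exists
  refine ⟨2 * m, K, fun x hx hle => hK x (mem_cylinder_of_interleave_mem_cylinder hx) ?_⟩
  exact hle.trans_eq (interleave_two_mul _ _)

theorem exists_equiv_prod_nat_fst_eq {α β : Type*} [Countable α] (f : α → β)
    (hf : ∀ b, (f ⁻¹' {b}).Infinite) : ∃ e : α ≃ β × ℕ, ∀ a, (e a).1 = f a := by
  have hfib (b : β) : Nonempty ({a // f a = b} ≃ ℕ) :=
    have : Infinite {a // f a = b} := (hf b).to_subtype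
    nonempty_equiv_of_countable
  exact ⟨(Equiv.sigmaFiberEquiv f).symm.trans <|
    (Equiv.sigmaCongrRight fun b => (hfib b).some).trans (Equiv.sigmaEquivProd β ℕ), fun _ => rfl⟩

theorem exists_equiv_nat_prod_nat_fst_le (ι : Type*) [Finite ι] [Nonempty ι] :
    ∃ e : (ι → ℕ × ℕ) ≃ ℕ × ℕ, ∀ v i, (e v).1 ≤ (v i).1 := by
  have hfib (k : ℕ) : ((fun v : ι → ℕ × ℕ => ⨅ i, (v i).1) ⁻¹' {k}).Infinite := by
    refine infinite_of_injective_forall_mem (f := fun l _ => (k, l)) ?_ fun l => by simp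
    exact fun l l' h => congrArg Prod.snd (congrFun h (Classical.arbitrary ι))
  obtain ⟨e, he⟩ := exists_equiv_prod_nat_fst_eq _ hfib
  exact ⟨e, fun v i => (he v).trans_le (ciInf_le (OrderBot.bddBelow _) i)⟩

theorem IsPiCode.exists_pi {ι : Type*} [Finite ι] [Nonempty ι] {X : ι → Type*}
    [∀ i, TopologicalSpace (X i)] {φ : ∀ i, X i ≃ (ℕ → ℕ × ℕ)} (hφ : ∀ i, IsPiCode (φ i)) :
    ∃ Φ : (∀ i, X i) ≃ (ℕ → ℕ × ℕ), IsPiCode Φ := by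
  obtain ⟨e, he⟩ := exists_equiv_nat_prod_nat_fst_le ι
  refine ⟨(Equiv.piCongrRight φ).trans <| (Equiv.piComm _).trans <| Equiv.piCongrRight fun _ => e,
    ?_, fun p U hU => ?_⟩
  · refine continuous_pi fun m => continuous_of_discreteTopology.comp (continuous_pi fun i => ?_)
    exact (continuous_apply m).comp ((hφ i).continuous.comp (continuous_apply i))
  · rw [nhds_pi] at hU
    obtain ⟨J, -, V, hV, hVU⟩ := mem_pi.1 hU
    filter_upwards [eventually_all.2 fun i => (hφ i).grows (p i) (V i) (hV i)] with m hm
    choose K hK using hm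
    obtain ⟨M, hM⟩ := Finite.exists_le K
    refine ⟨M, fun x hx hMx => ?_⟩
    have hcyl (i : ι) : φ i (x i) ∈ PiNat.cylinder (φ i (p i)) m := fun j hj =>
      congrFun (e.injective (hx j hj)) i
    exact hVU fun i _ => hK i (x i) (hcyl i) ((hM i).trans (hMx.trans (he _ i)))

section DigitSystems

open scoped unitInterval

variable {Y : Set I} {g : ℕ → I → I}

/-- The composite `g k ∘ g l` attached to a pair `(k, l)` of digits. -/
def pairMap (g : ℕ → I → I) (d : ℕ × ℕ) : I → I := g d.1 ∘ g d.2

/-- The filter of left neighbourhoods of a point of a set `Y` of numbers in `[0, 1]`. -/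
def leftNhds (y : Y) : Filter Y := comap Subtype.val (𝓝[≤] (y : I))

/-- Maps `g k : [0, 1] → [0, 1]` under which every point of `Y` has a unique expansion
`g k₀ (g k₁ (g k₂ …))`, smaller digits giving larger points. Monotonicity and contraction are
demanded of the two-fold composites only, so that continued fractions qualify. -/
structure IsDigitSystem (Y : Set I) (g : ℕ → I → I) : Prop where
  zero_notMem : 0 ∉ Y
  ne_zero : ∀ k u, g k u ≠ 0
  mem_iff : ∀ k u, u ≠ 0 → (g k u ∈ Y ↔ u ∈ Y)
  exists_eq : ∀ x ∈ Y, ∃ k, ∃ u ∈ Y, g k u = x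
  lt_of_lt : ∀ {k l u v}, k < l → u ∈ Y → v ∈ Y → g l u < g k v
  strictMono : ∀ d, StrictMono (pairMap g d)
  lipschitzWith : ∀ d, LipschitzWith (1 / 2) (pairMap g d)
  limit_mem : ∀ (x : ℕ → I) (d : ℕ → ℕ × ℕ), (∀ i, x i = pairMap g (d i) (x (i + 1))) → x 0 ∈ Y

namespace IsDigitSystem

theorem ne_zero_of_mem (S : IsDigitSystem Y g) {u : I} (hu : u ∈ Y) : u ≠ 0 :=
  fun h => S.zero_notMem (h ▸ hu)

theorem map_mem (S : IsDigitSystem Y g) (k : ℕ) {u : I} (hu : u ∈ Y) : g k u ∈ Y :=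
  (S.mem_iff k u (S.ne_zero_of_mem hu)).2 hu

theorem pairMap_mem_iff (S : IsDigitSystem Y g) (d : ℕ × ℕ) {u : I} (hu : u ≠ 0) :
    pairMap g d u ∈ Y ↔ u ∈ Y :=
  (S.mem_iff d.1 _ (S.ne_zero d.2 u)).trans (S.mem_iff d.2 u hu)

theorem injective (S : IsDigitSystem Y g) (k : ℕ) : Function.Injective (g k) :=
  (S.strictMono (k, k)).injective.of_comp

theorem eq_of_map_eq (S : IsDigitSystem Y g) {k l : ℕ} {u v : I} (hu : u ∈ Y) (hv : v ∈ Y)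
    (h : g k u = g l v) : k = l ∧ u = v := by
  rcases lt_trichotomy k l with hkl | rfl | hkl
  · exact ((S.lt_of_lt hkl hv hu).ne h.symm).elim
  · exact ⟨rfl, S.injective k h⟩
  · exact ((S.lt_of_lt hkl hu hv).ne h).elim

/-- Prepending a pair of digits to the expansion of a point of `Y`. -/
noncomputable def cons (S : IsDigitSystem Y g) : (ℕ × ℕ) × Y ≃ Y :=
  Equiv.ofBijective
    (fun q => ⟨pairMap g q.1 q.2, (S.pairMap_mem_iff q.1 (S.ne_zero_of_mem q.2.2)).2 q.2.2⟩) <| by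
    constructor
    · rintro ⟨⟨k, r⟩, u, hu⟩ ⟨⟨l, s⟩, v, hv⟩ h
      obtain ⟨rfl, h'⟩ := S.eq_of_map_eq (S.map_mem r hu) (S.map_mem s hv) (congrArg Subtype.val h)
      obtain ⟨rfl, rfl⟩ := S.eq_of_map_eq hu hv h'
      rfl
    · rintro ⟨x, hx⟩
      obtain ⟨k, u, hu, rfl⟩ := S.exists_eq x hx
      obtain ⟨r, v, hv, rfl⟩ := S.exists_eq u hu
      exact ⟨((k, r), ⟨v, hv⟩), rfl⟩

/-- The expansion of a point of `Y`, with the digits grouped into pairs. -/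
noncomputable def digits (S : IsDigitSystem Y g) (y : Y) (m : ℕ) : ℕ × ℕ :=
  (S.cons.symm ((fun z => (S.cons.symm z).2)^[m] y)).1

theorem digits_cons_zero (S : IsDigitSystem Y g) (d : ℕ × ℕ) (y : Y) :
    S.digits (S.cons (d, y)) 0 = d := by
  simp [digits]

theorem digits_cons_succ (S : IsDigitSystem Y g) (d : ℕ × ℕ) (y : Y) (m : ℕ) :
    S.digits (S.cons (d, y)) (m + 1) = S.digits y m := by
  simp [digits]

theorem digits_cons_mem_cylinder_succ (S : IsDigitSystem Y g) {d e : ℕ × ℕ} {y z : Y} {m : ℕ} :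
    S.digits (S.cons (e, z)) ∈ PiNat.cylinder (S.digits (S.cons (d, y))) (m + 1) ↔
      e = d ∧ S.digits z ∈ PiNat.cylinder (S.digits y) m := by
  simp only [PiNat.mem_cylinder_iff, Nat.forall_lt_succ_left', digits_cons_zero, digits_cons_succ]

theorem dist_le_of_digits_mem_cylinder (S : IsDigitSystem Y g) {m : ℕ} {y z : Y}
    (h : S.digits z ∈ PiNat.cylinder (S.digits y) m) : dist (z : I) y ≤ (1 / 2) ^ m := by
  induction m generalizing y z with
  | zero => exact (Real.dist_le_of_mem_Icc_01 (z : I).2 (y : I).2).trans_eq (pow_zero _).symm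
  | succ m ih =>
    obtain ⟨⟨d, y⟩, rfl⟩ := S.cons.surjective y
    obtain ⟨⟨e, z⟩, rfl⟩ := S.cons.surjective z
    obtain ⟨rfl, htail⟩ := S.digits_cons_mem_cylinder_succ.1 h
    calc dist (pairMap g e z) (pairMap g e y)
      _ ≤ 1 / 2 * dist (z : I) y := by simpa using (S.lipschitzWith e).dist_le_mul z y
      _ ≤ 1 / 2 * (1 / 2) ^ m := by gcongr; exact ih htail
      _ = (1 / 2) ^ (m + 1) := (pow_succ' _ m).symm

theorem lt_of_digits_lt (S : IsDigitSystem Y g) {m : ℕ} {y z : Y}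
    (h : S.digits z ∈ PiNat.cylinder (S.digits y) m)
    (hlt : (S.digits y m).1 < (S.digits z m).1) : z < y := by
  induction m generalizing y z with
  | zero =>
    obtain ⟨⟨d, y⟩, rfl⟩ := S.cons.surjective y
    obtain ⟨⟨e, z⟩, rfl⟩ := S.cons.surjective z
    rw [digits_cons_zero, digits_cons_zero] at hlt
    exact S.lt_of_lt hlt (S.map_mem e.2 z.2) (S.map_mem d.2 y.2)
  | succ m ih =>
    obtain ⟨⟨d, y⟩, rfl⟩ := S.cons.surjective y
    obtain ⟨⟨e, z⟩, rfl⟩ := S.cons.surjective z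
    obtain ⟨rfl, htail⟩ := S.digits_cons_mem_cylinder_succ.1 h
    rw [digits_cons_succ, digits_cons_succ] at hlt
    exact S.strictMono e (ih htail hlt)

theorem digits_injective (S : IsDigitSystem Y g) : Function.Injective S.digits := by
  intro y z h
  have hdist (m : ℕ) : dist (y : I) z ≤ (1 / 2) ^ m :=
    S.dist_le_of_digits_mem_cylinder fun i _ => congrFun h i
  have hzero : dist (y : I) z ≤ 0 := ge_of_tendsto'
    (tendsto_pow_atTop_nhds_zero_of_lt_one (by norm_num) (by norm_num)) hdist
  exact Subtype.ext (dist_le_zero.1 hzero)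

/-- A function reading every digit sequence as a point is a fixed point of the operator
`L ↦ (d ↦ g_{d 0} (L (d ∘ succ)))`, which is monotone, so that Knaster–Tarski applies. -/
theorem exists_eval (S : IsDigitSystem Y g) :
    ∃ L : (ℕ → ℕ × ℕ) → I, ∀ d, L d = pairMap g (d 0) (L fun i => d (i + 1)) := by
  let T : ((ℕ → ℕ × ℕ) → I) →o ((ℕ → ℕ × ℕ) → I) :=
    { toFun := fun L d => pairMap g (d 0) (L fun i => d (i + 1))
      monotone' := fun _ _ h d => (S.strictMono (d 0)).monotone (h _) }
  exact ⟨T.lfp, fun d => (congrFun T.map_lfp d).symm⟩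

theorem digits_surjective (S : IsDigitSystem Y g) : Function.Surjective S.digits := by
  obtain ⟨L, hL⟩ := S.exists_eval
  have hmem (d : ℕ → ℕ × ℕ) : L d ∈ Y :=
    S.limit_mem (fun i => L fun j => d (j + i)) d fun i => by
      rw [hL]
      simp only [zero_add, add_right_comm, add_assoc]
  have hcons (d : ℕ → ℕ × ℕ) : (⟨L d, hmem d⟩ : Y) = S.cons (d 0, ⟨L fun i => d (i + 1), hmem _⟩) :=
    Subtype.ext (hL d)
  refine fun d => ⟨⟨L d, hmem d⟩, funext fun m => ?_⟩
  induction m generalizing d with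
  | zero => rw [hcons, digits_cons_zero]
  | succ m ih => rw [hcons, digits_cons_succ, ih]

theorem tendsto_cons_symm (S : IsDigitSystem Y g) (d : ℕ × ℕ) (y : Y) :
    Tendsto S.cons.symm (leftNhds (S.cons (d, y))) (pure d ×ˢ leftNhds y) := by
  have hy : (0 : I) < y := unitInterval.pos_iff_ne_zero.2 (S.ne_zero_of_mem y.2)
  intro s hs
  rw [pure_prod] at hs
  obtain ⟨t, ht, hts⟩ := mem_comap.1 (mem_map.1 hs)
  obtain ⟨w, hw, hwt⟩ := (mem_nhdsLE_iff_exists_Ioc_subset' hy).1 ht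
  refine mem_comap.2 ⟨_, Ioc_mem_nhdsLE (S.strictMono d hw), fun z hz => ?_⟩
  obtain ⟨u, hu, huz⟩ := intermediate_value_Ioc (le_of_lt hw)
    (S.lipschitzWith d).continuous.continuousOn hz
  have huY : u ∈ Y := (S.pairMap_mem_iff d (pos_of_gt hu.1).ne').1 (huz ▸ z.2)
  have hcons : z = S.cons (d, ⟨u, huY⟩) := Subtype.ext huz.symm
  rw [mem_preimage, hcons, Equiv.symm_apply_apply]
  exact @hts ⟨u, huY⟩ (hwt hu)

theorem tendsto_digits (S : IsDigitSystem Y g) (y : Y) (m : ℕ) :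
    Tendsto (fun z => S.digits z m) (leftNhds y) (pure (S.digits y m)) := by
  induction m generalizing y with
  | zero =>
    obtain ⟨⟨d, y⟩, rfl⟩ := S.cons.surjective y
    rw [digits_cons_zero]
    exact tendsto_fst.comp (S.tendsto_cons_symm d y)
  | succ m ih =>
    obtain ⟨⟨d, y⟩, rfl⟩ := S.cons.surjective y
    rw [digits_cons_succ]
    exact (ih y).comp (tendsto_snd.comp (S.tendsto_cons_symm d y))

end IsDigitSystem

/-- The inverse branch `u ↦ (1 + u) / 2 ^ (k + 1)` of binary expansion: its image is the interval
between `2⁻⁽ᵏ⁺¹⁾` and `2⁻ᵏ`. -/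
noncomputable def dyadicMap (k : ℕ) (u : I) : I :=
  ⟨(1 + u) / 2 ^ (k + 1), by
    have hu := unitInterval.nonneg u
    positivity, by
    rw [div_le_one (by positivity)]
    have := unitInterval.le_one u
    have : (1 : ℝ) ≤ 2 ^ k := one_le_pow₀ one_le_two
    rw [pow_succ]
    linarith⟩

theorem coe_dyadicMap (k : ℕ) (u : I) : (dyadicMap k u : ℝ) = (1 + u) / 2 ^ (k + 1) := rfl

theorem dyadicMap_pos (k : ℕ) (u : I) : 0 < dyadicMap k u := by
  have := unitInterval.nonneg u
  rw [← unitInterval.coe_pos, coe_dyadicMap]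
  positivity

theorem dyadicMap_strictMono (k : ℕ) : StrictMono (dyadicMap k) := by
  intro u v (huv : (u : ℝ) < v)
  change (1 + u : ℝ) / 2 ^ (k + 1) < (1 + v) / 2 ^ (k + 1)
  gcongr

theorem dyadicMap_lt_dyadicMap_of_lt {k l : ℕ} (hkl : k < l) (u : I) {v : I} (hv : v ≠ 0) :
    dyadicMap l u < dyadicMap k v := by
  have hu := unitInterval.le_one u
  have hv : (0 : ℝ) < v := unitInterval.pos_iff_ne_zero.2 hv
  change (1 + u : ℝ) / 2 ^ (l + 1) < (1 + v) / 2 ^ (k + 1)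
  calc (1 + u : ℝ) / 2 ^ (l + 1)
    _ ≤ (1 + 1) / 2 ^ (l + 1) := by gcongr
    _ = 1 / 2 ^ l := by rw [pow_succ]; ring
    _ ≤ 1 / 2 ^ (k + 1) := by gcongr; exacts [one_le_two, hkl]
    _ < (1 + v) / 2 ^ (k + 1) := by gcongr; linarith

theorem lipschitzWith_dyadicMap (k : ℕ) : LipschitzWith (1 / 2) (dyadicMap k) := by
  refine LipschitzWith.of_dist_le_mul fun u v => ?_
  have hsub : (dyadicMap k u - dyadicMap k v : ℝ) = (u - v) / 2 ^ (k + 1) := by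
    rw [coe_dyadicMap, coe_dyadicMap]
    ring
  have hpow : (2 : ℝ) ≤ 2 ^ (k + 1) := le_self_pow₀ one_le_two k.succ_ne_zero
  calc dist (dyadicMap k u) (dyadicMap k v)
    _ = dist (u : ℝ) v / 2 ^ (k + 1) := by
      rw [Subtype.dist_eq, Real.dist_eq, hsub, abs_div, abs_pow, Nat.abs_ofNat, Real.dist_eq]
    _ ≤ dist (u : ℝ) v / 2 := by gcongr
    _ = (1 / 2 : NNReal) * dist u v := by rw [Subtype.dist_eq]; push_cast; ring

theorem exists_dyadicMap_eq {x : I} (hx : x ≠ 0) : ∃ k, ∃ u ≠ 0, dyadicMap k u = x := by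
  obtain ⟨k, hlt, hle⟩ := exists_nat_pow_near_of_lt_one (unitInterval.pos_iff_ne_zero.2 hx)
    (unitInterval.le_one x) (by norm_num : (0 : ℝ) < 1 / 2) (by norm_num)
  rw [one_div_pow, div_lt_iff₀' (by positivity)] at hlt
  rw [one_div_pow, le_div_iff₀' (by positivity)] at hle
  refine ⟨k, ⟨2 ^ (k + 1) * x - 1, by linarith, by rw [pow_succ]; linarith⟩, ?_, ?_⟩
  · exact Subtype.coe_ne_coe.1 (sub_pos.2 hlt).ne'
  · ext
    rw [coe_dyadicMap, add_sub_cancel, mul_div_cancel_left₀ _ (by positivity)]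

theorem isDigitSystem_dyadicMap : IsDigitSystem {0}ᶜ dyadicMap where
  zero_notMem h := h rfl
  ne_zero k u := (dyadicMap_pos k u).ne'
  mem_iff k u hu := iff_of_true (dyadicMap_pos k u).ne' hu
  exists_eq _ := exists_dyadicMap_eq
  lt_of_lt hkl _ hv := dyadicMap_lt_dyadicMap_of_lt hkl _ hv
  strictMono d := (dyadicMap_strictMono d.1).comp (dyadicMap_strictMono d.2)
  lipschitzWith d := ((lipschitzWith_dyadicMap d.1).comp (lipschitzWith_dyadicMap d.2)).weaken <|
    mul_le_of_le_one_left' (by norm_num)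
  limit_mem x d h := by
    rw [h 0]
    exact (dyadicMap_pos _ _).ne'

/-- The inverse branch `u ↦ 1 / (k + 1 + u)` of the Gauss map, which prepends the partial quotient
`k + 1` to a continued fraction. -/
noncomputable def gaussMap (k : ℕ) (u : I) : I :=
  ⟨(k + 1 + u)⁻¹, by
    have hu := unitInterval.nonneg u
    positivity, by
    have hu := unitInterval.nonneg u
    exact inv_le_one_of_one_le₀ (by linarith [k.cast_nonneg (α := ℝ)])⟩

theorem coe_gaussMap (k : ℕ) (u : I) : (gaussMap k u : ℝ) = (k + 1 + u : ℝ)⁻¹ := rfl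

theorem gaussMap_denom_pos (k : ℕ) (u : I) : 0 < (k + 1 + u : ℝ) := by
  have hu := unitInterval.nonneg u
  positivity

theorem gaussMap_pos (k : ℕ) (u : I) : 0 < gaussMap k u := by
  rw [← unitInterval.coe_pos, coe_gaussMap]
  exact inv_pos.2 (gaussMap_denom_pos k u)

theorem gaussMap_strictAnti (k : ℕ) : StrictAnti (gaussMap k) := fun u v (huv : (u : ℝ) < v) =>
  inv_strictAnti₀ (gaussMap_denom_pos k u) (by gcongr)

theorem gaussMap_lt_gaussMap_of_lt {k l : ℕ} (hkl : k < l) (u : I) {v : I} (hv : v ≠ 1) :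
    gaussMap l u < gaussMap k v := by
  have hu := unitInterval.nonneg u
  have hv : (v : ℝ) < 1 := unitInterval.lt_one_iff_ne_one.2 hv
  have hkl : (k + 1 : ℝ) ≤ l := by exact_mod_cast hkl
  exact inv_strictAnti₀ (gaussMap_denom_pos k v) (by linarith)

theorem gaussMap_sub_gaussMap (k : ℕ) (u v : I) :
    (gaussMap k u - gaussMap k v : ℝ) = gaussMap k u * gaussMap k v * (v - u) := by
  have hu := (gaussMap_denom_pos k u).ne'
  have hv := (gaussMap_denom_pos k v).ne'
  rw [coe_gaussMap, coe_gaussMap]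
  field_simp
  ring

theorem gaussMap_mul_self_le_half (k : ℕ) (u : I) : (gaussMap k u * u : ℝ) ≤ 1 / 2 := by
  rw [coe_gaussMap, inv_mul_le_iff₀ (gaussMap_denom_pos k u)]
  linarith [unitInterval.le_one u, k.cast_nonneg (α := ℝ)]

theorem gaussMap_mul_self_nonneg (k : ℕ) (u : I) : (0 : ℝ) ≤ gaussMap k u * u :=
  mul_nonneg (unitInterval.nonneg _) (unitInterval.nonneg u)

theorem lipschitzWith_pairMap_gaussMap (d : ℕ × ℕ) :
    LipschitzWith (1 / 2) (pairMap gaussMap d) := by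
  refine LipschitzWith.of_dist_le_mul fun u v => ?_
  set s := gaussMap d.2 u
  set t := gaussMap d.2 v
  have hsub : (gaussMap d.1 s - gaussMap d.1 t : ℝ) =
      (gaussMap d.1 s * s) * (gaussMap d.1 t * t) * (u - v) := by
    rw [gaussMap_sub_gaussMap, gaussMap_sub_gaussMap]
    ring
  have hle : (gaussMap d.1 s * s : ℝ) * (gaussMap d.1 t * t) ≤ 1 / 2 * (1 / 2) :=
    mul_le_mul (gaussMap_mul_self_le_half d.1 s) (gaussMap_mul_self_le_half d.1 t)
      (gaussMap_mul_self_nonneg d.1 t) (by norm_num)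
  calc dist (gaussMap d.1 s) (gaussMap d.1 t)
    _ = (gaussMap d.1 s * s) * (gaussMap d.1 t * t) * dist u v := by
      rw [Subtype.dist_eq, Real.dist_eq, hsub, abs_mul, abs_of_nonneg, Subtype.dist_eq,
        Real.dist_eq]
      exact mul_nonneg (gaussMap_mul_self_nonneg d.1 s) (gaussMap_mul_self_nonneg d.1 t)
    _ ≤ 1 / 2 * dist u v := by gcongr; linarith
    _ = (1 / 2 : NNReal) * dist u v := by push_cast; rfl

theorem irrational_gaussMap_iff {k : ℕ} {u : I} :
    Irrational (gaussMap k u : ℝ) ↔ Irrational (u : ℝ) := by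
  rw [coe_gaussMap, irrational_inv_iff, ← Nat.cast_add_one, irrational_natCast_add_iff]

theorem exists_gaussMap_eq {x : I} (hx : x ≠ 0) : ∃ k u, gaussMap k u = x := by
  have hone : (1 : ℝ) ≤ (x : ℝ)⁻¹ :=
    (one_le_inv₀ (unitInterval.pos_iff_ne_zero.2 hx)).2 (unitInterval.le_one x)
  obtain ⟨k, hk⟩ := Nat.exists_eq_add_one.2 (Nat.floor_pos.2 hone)
  have hle := Nat.floor_le (zero_le_one.trans hone)
  have hlt := Nat.lt_floor_add_one (x : ℝ)⁻¹
  rw [hk, Nat.cast_add_one] at hle hlt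
  refine ⟨k, ⟨(x : ℝ)⁻¹ - (k + 1), by linarith, by linarith⟩, Subtype.ext ?_⟩
  rw [coe_gaussMap, add_sub_cancel, inv_inv]

theorem gaussMap_lt_one (k : ℕ) {u : I} (hu : u ≠ 0) : gaussMap k u < 1 := by
  have hu : (0 : ℝ) < u := unitInterval.pos_iff_ne_zero.2 hu
  rw [← unitInterval.coe_lt_one, coe_gaussMap]
  exact inv_lt_one_of_one_lt₀ (by linarith [k.cast_nonneg (α := ℝ)])

theorem exists_rat_eq_of_gaussMap_eq {k : ℕ} {u : I} (hu : u ≠ 0) {q : ℚ}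
    (h : (gaussMap k u : ℝ) = q) : ∃ q' : ℚ, (u : ℝ) = q' ∧ q'.den < q.den := by
  have hpos : 0 < q := by exact_mod_cast h ▸ unitInterval.coe_pos.2 (gaussMap_pos k u)
  have hlt : q < 1 := by exact_mod_cast h ▸ unitInterval.coe_lt_one.2 (gaussMap_lt_one k hu)
  refine ⟨q⁻¹ - (k + 1 : ℕ), ?_, ?_⟩
  · push_cast
    rw [← h, coe_gaussMap, inv_inv, add_sub_cancel_left]
  · rw [Rat.sub_natCast_den, Rat.den_inv_of_ne_zero hpos.ne']
    have hnum := Rat.num_pos.2 hpos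
    have hden := Rat.num_lt_denom_iff.2 hlt
    omega

theorem irrational_of_eq_pairMap_gaussMap {x : ℕ → I} {d : ℕ → ℕ × ℕ}
    (h : ∀ i, x i = pairMap gaussMap (d i) (x (i + 1))) (i : ℕ) : Irrational (x i : ℝ) := by
  suffices ∀ n i (q : ℚ), q.den = n → (x i : ℝ) ≠ q by
    rintro ⟨q, hq⟩
    exact this _ i q rfl hq.symm
  intro n
  induction n using Nat.strong_induction_on with
  | h n ih =>
    rintro i q rfl hq
    have hne (i : ℕ) : x i ≠ 0 := h i ▸ (gaussMap_pos _ _).ne'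
    rw [h i] at hq
    obtain ⟨r, hr, hrq⟩ := exists_rat_eq_of_gaussMap_eq (gaussMap_pos _ _).ne' hq
    obtain ⟨s, hs, hsr⟩ := exists_rat_eq_of_gaussMap_eq (hne (i + 1)) hr
    exact ih _ (hsr.trans hrq) (i + 1) s rfl hs

theorem isDigitSystem_gaussMap : IsDigitSystem {u | Irrational (u : ℝ)} gaussMap where
  zero_notMem h := h.ne_zero rfl
  ne_zero k u := (gaussMap_pos k u).ne'
  mem_iff _ _ _ := irrational_gaussMap_iff
  exists_eq _ hx := by
    obtain ⟨k, u, rfl⟩ := exists_gaussMap_eq fun h => hx.ne_zero (congrArg Subtype.val h)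
    exact ⟨k, u, irrational_gaussMap_iff.1 hx, rfl⟩
  lt_of_lt hkl _ hv := gaussMap_lt_gaussMap_of_lt hkl _ fun h => hv.ne_one (congrArg Subtype.val h)
  strictMono d := (gaussMap_strictAnti d.1).comp (gaussMap_strictAnti d.2)
  lipschitzWith := lipschitzWith_pairMap_gaussMap
  limit_mem _ _ h := irrational_of_eq_pairMap_gaussMap h 0

end DigitSystems

section Sorgenfrey

open scoped unitInterval

namespace SorgLine

/-- The identity map, forgetting the Sorgenfrey topology. -/
def toReal : SorgLine ≃ ℝ := Equiv.refl ℝ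

theorem nhds_eq_comap (x : SorgLine) : 𝓝 x = comap toReal (𝓝[≥] toReal x) := by
  refine le_antisymm ?_ ?_
  · rintro s ⟨t, ht, hts⟩
    obtain ⟨b, hb, hbt⟩ := mem_nhdsGE_iff_exists_Ico_subset.1 ht
    have hopen : IsOpen (toReal ⁻¹' Ico (toReal x) b) := .basic _ ⟨_, b, rfl⟩
    exact mem_of_superset (hopen.mem_nhds ⟨le_rfl, hb⟩) ((preimage_mono hbt).trans hts)
  · rw [TopologicalSpace.nhds_generateFrom]
    refine le_iInf₂ ?_
    rintro _ ⟨hx, a, b, rfl⟩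
    exact le_principal_iff.2 (preimage_mem_comap (Ico_mem_nhdsGE_of_mem hx))

end SorgLine

/-- The distance from `x` to the integer `⌊x⌋ + 1`. Reversing the direction turns right
neighbourhoods into left ones, as needed for expansions whose values decrease in the digits. -/
noncomputable def offset (x : ℝ) : I := σ ⟨Int.fract x, Int.fract_nonneg x, (Int.fract_lt_one x).le⟩

theorem coe_offset (x : ℝ) : (offset x : ℝ) = ⌊x⌋ + 1 - x := by
  change 1 - Int.fract x = _
  rw [Int.fract]
  ring

theorem offset_ne_zero (x : ℝ) : offset x ≠ 0 := by
  rw [← unitInterval.coe_ne_zero, coe_offset]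
  exact (sub_pos.2 (Int.lt_floor_add_one x)).ne'

theorem floor_add_one_sub (n : ℤ) {u : I} (hu : u ≠ 0) : ⌊(n + 1 - u : ℝ)⌋ = n := by
  have hpos : (0 : ℝ) < u := unitInterval.pos_iff_ne_zero.2 hu
  rw [Int.floor_eq_iff]
  constructor <;> linarith [unitInterval.le_one u]

theorem offset_add_one_sub (n : ℤ) {u : I} (hu : u ≠ 0) : offset (n + 1 - u) = u := by
  ext
  rw [coe_offset, floor_add_one_sub n hu, sub_sub_cancel]

theorem irrational_offset_iff {x : ℝ} : Irrational (offset x : ℝ) ↔ Irrational x := by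
  rw [coe_offset]
  exact_mod_cast irrational_intCast_sub_iff (m := ⌊x⌋ + 1)

theorem eq_of_floor_eq_of_offset_eq {x y : ℝ} (hfloor : ⌊x⌋ = ⌊y⌋) (hoffset : offset x = offset y) :
    x = y := by
  have h := congrArg Subtype.val hoffset
  rw [coe_offset, coe_offset, hfloor] at h
  linarith

theorem tendsto_offset_nhdsGE (x : ℝ) : Tendsto offset (𝓝[≥] x) (𝓝[≤] offset x) := by
  have hfloor : ∀ᶠ z in 𝓝[≥] x, ⌊z⌋ = ⌊x⌋ := tendsto_pure.1 (tendsto_floor_right_pure_floor x)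
  refine tendsto_nhdsWithin_iff.2 ⟨tendsto_subtype_rng.2 ?_, ?_⟩
  · rw [coe_offset]
    refine (Tendsto.sub tendsto_const_nhds (tendsto_id.mono_left nhdsWithin_le_nhds)).congr' ?_
    filter_upwards [hfloor] with z hz
    rw [coe_offset, hz, id]
  · filter_upwards [hfloor, self_mem_nhdsWithin] with z hz hxz
    rw [mem_Iic, ← Subtype.coe_le_coe, coe_offset, coe_offset, hz]
    exact sub_le_sub_left hxz _

/-- Prepending a term to a sequence. -/
def seqCons (α : Type*) : α × (ℕ → α) ≃ (ℕ → α) where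
  toFun p n := n.casesOn p.1 p.2
  invFun f := (f 0, fun n => f (n + 1))
  left_inv _ := rfl
  right_inv f := funext fun n => by cases n <;> rfl

section Code

variable {X : Type u} {Y : Set I} {g : ℕ → I → I} {j : X → SorgLine}

/-- If the injective map `j` takes exactly the values with offset in `Y`, then its values are
parametrized by their integer parts and their offsets. -/
noncomputable def floorOffsetEquiv (hj : Function.Injective j) (hY : 0 ∉ Y)
    (hrange : ∀ x, x ∈ range j ↔ offset x.toReal ∈ Y) : X ≃ ℤ × Y :=
  Equiv.ofBijective (fun x => (⌊(j x).toReal⌋, ⟨offset (j x).toReal, (hrange _).1 ⟨x, rfl⟩⟩)) <| by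
    constructor
    · intro x z h
      obtain ⟨hfloor, hoffset⟩ := Prod.mk.inj h
      exact hj (SorgLine.toReal.injective
        (eq_of_floor_eq_of_offset_eq hfloor (congrArg Subtype.val hoffset)))
    · rintro ⟨n, u, hu⟩
      have hu0 : u ≠ 0 := fun h => hY (h ▸ hu)
      obtain ⟨x, hx⟩ := (hrange (SorgLine.toReal.symm (n + 1 - u))).2 <| by
        rwa [Equiv.apply_symm_apply, offset_add_one_sub n hu0]
      have hval : (j x).toReal = n + 1 - u := hx ▸ SorgLine.toReal.apply_symm_apply _
      refine ⟨x, Prod.ext ?_ (Subtype.ext ?_)⟩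
      · exact (congrArg Int.floor hval).trans (floor_add_one_sub n hu0)
      · exact (congrArg offset hval).trans (offset_add_one_sub n hu0)

theorem tendsto_floorOffsetEquiv [TopologicalSpace X] (hj : IsEmbedding j) (hY : 0 ∉ Y)
    (hrange : ∀ x, x ∈ range j ↔ offset x.toReal ∈ Y) (x : X) :
    Tendsto (floorOffsetEquiv hj.injective hY hrange) (𝓝 x)
      (pure ⌊(j x).toReal⌋ ×ˢ leftNhds (floorOffsetEquiv hj.injective hY hrange x).2) := by
  rw [hj.nhds_eq_comap, SorgLine.nhds_eq_comap, comap_comap]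
  refine Tendsto.prodMk ?_ (tendsto_comap_iff.2 ?_)
  · exact (tendsto_floor_right_pure_floor _).comp tendsto_comap
  · exact (tendsto_offset_nhdsGE _).comp tendsto_comap

/-- The code of a point: its integer part, followed by the digits of its offset. -/
noncomputable def sorgCode (S : IsDigitSystem Y g) (hj : Function.Injective j)
    (hrange : ∀ x, x ∈ range j ↔ offset x.toReal ∈ Y) : X ≃ (ℕ → ℕ × ℕ) :=
  (floorOffsetEquiv hj S.zero_notMem hrange).trans <|
    ((Denumerable.equiv₂ ℤ (ℕ × ℕ)).prodCongr
      (Equiv.ofBijective S.digits ⟨S.digits_injective, S.digits_surjective⟩)).trans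
        (seqCons (ℕ × ℕ))

theorem sorgCode_zero (S : IsDigitSystem Y g) (hj : Function.Injective j)
    (hrange : ∀ x, x ∈ range j ↔ offset x.toReal ∈ Y) (x : X) :
    sorgCode S hj hrange x 0 = Denumerable.equiv₂ ℤ (ℕ × ℕ) ⌊(j x).toReal⌋ := rfl

theorem sorgCode_succ (S : IsDigitSystem Y g) (hj : Function.Injective j)
    (hrange : ∀ x, x ∈ range j ↔ offset x.toReal ∈ Y) (x : X) (m : ℕ) :
    sorgCode S hj hrange x (m + 1) =
      S.digits (floorOffsetEquiv hj S.zero_notMem hrange x).2 m := rfl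

theorem sorgCode_mem_cylinder_succ (S : IsDigitSystem Y g) (hj : Function.Injective j)
    (hrange : ∀ x, x ∈ range j ↔ offset x.toReal ∈ Y) {p x : X} {m : ℕ} :
    sorgCode S hj hrange x ∈ PiNat.cylinder (sorgCode S hj hrange p) (m + 1) ↔
      ⌊(j x).toReal⌋ = ⌊(j p).toReal⌋ ∧
        S.digits (floorOffsetEquiv hj S.zero_notMem hrange x).2 ∈
          PiNat.cylinder (S.digits (floorOffsetEquiv hj S.zero_notMem hrange p).2) m := by
  simp only [PiNat.mem_cylinder_iff, Nat.forall_lt_succ_left, sorgCode_zero, sorgCode_succ,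
    EmbeddingLike.apply_eq_iff_eq]

theorem continuous_sorgCode [TopologicalSpace X] (S : IsDigitSystem Y g) (hj : IsEmbedding j)
    (hrange : ∀ x, x ∈ range j ↔ offset x.toReal ∈ Y) :
    Continuous (sorgCode S hj.injective hrange) := by
  refine continuous_pi fun m => continuous_iff_continuousAt.2 fun x => ?_
  refine Tendsto.mono_right ?_ (pure_le_nhds _)
  have h := tendsto_floorOffsetEquiv hj S.zero_notMem hrange x
  cases m with
  | zero =>
    exact (tendsto_pure_pure (Denumerable.equiv₂ ℤ (ℕ × ℕ)) _).comp (tendsto_fst.comp h)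
  | succ m => exact (S.tendsto_digits _ m).comp (tendsto_snd.comp h)

theorem mem_Ico_of_offset_lt {x y ε : ℝ} (hfloor : ⌊y⌋ = ⌊x⌋) (hlt : offset y < offset x)
    (hdist : dist (offset y) (offset x) < ε) : y ∈ Ico x (x + ε) := by
  rw [Subtype.dist_eq, Real.dist_eq, abs_sub_lt_iff, coe_offset, coe_offset, hfloor] at hdist
  rw [← Subtype.coe_lt_coe, coe_offset, coe_offset, hfloor] at hlt
  constructor <;> linarith [hdist.2]

theorem isPiCode_sorgCode [TopologicalSpace X] (S : IsDigitSystem Y g) (hj : IsEmbedding j)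
    (hrange : ∀ x, x ∈ range j ↔ offset x.toReal ∈ Y) :
    IsPiCode (sorgCode S hj.injective hrange) := by
  refine ⟨continuous_sorgCode S hj hrange, fun p U hU => ?_⟩
  rw [hj.nhds_eq_comap, SorgLine.nhds_eq_comap, comap_comap] at hU
  obtain ⟨t, ht, htU⟩ := hU
  obtain ⟨b, hb, hbt⟩ := mem_nhdsGE_iff_exists_Ico_subset.1 ht
  have hsmall : ∀ᶠ m : ℕ in atTop, (1 / 2 : ℝ) ^ m < b - (j p).toReal :=
    (tendsto_pow_atTop_nhds_zero_of_lt_one (by norm_num) (by norm_num)).eventually_lt_const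
      (sub_pos.2 hb)
  rw [← map_add_atTop_eq_nat 1, eventually_map]
  filter_upwards [hsmall] with m hm
  refine ⟨(sorgCode S hj.injective hrange p (m + 1)).1 + 1, fun x hx hlt => htU (hbt ?_)⟩
  obtain ⟨hfloor, hdigits⟩ := (sorgCode_mem_cylinder_succ S hj.injective hrange).1 hx
  have hmem := mem_Ico_of_offset_lt hfloor (S.lt_of_digits_lt hdigits hlt)
    ((S.dist_le_of_digits_mem_cylinder hdigits).trans_lt hm)
  rwa [add_sub_cancel] at hmem

theorem exists_isPiCode_sorgLine : ∃ φ : SorgLine ≃ (ℕ → ℕ × ℕ), IsPiCode φ :=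
  ⟨_, isPiCode_sorgCode isDigitSystem_dyadicMap .id fun x =>
    iff_of_true (mem_range_self x) (offset_ne_zero _)⟩

theorem exists_isPiCode_irrSorg : ∃ φ : IrrSorg ≃ (ℕ → ℕ × ℕ), IsPiCode φ :=
  ⟨_, isPiCode_sorgCode isDigitSystem_gaussMap .subtypeVal fun _ => by
    rw [Subtype.range_coe]
    exact irrational_offset_iff.symm⟩

end Code

end Sorgenfrey

/-- Finite powers of the Sorgenfrey line and of the irrational Sorgenfrey
line have π-trees. -/
theorem finite_powers_of_sorgenfrey_have_piTree (n : ℕ) (hn : 1 ≤ n) :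
    (∃ F : FoliageTree (Fin n → SorgLine), F.IsPiTree) ∧
      ∃ F : FoliageTree (Fin n → ↥IrrSorg), F.IsPiTree := by
  have : Nonempty (Fin n) := Fin.pos_iff_nonempty.1 hn
  obtain ⟨φ, hφ⟩ := exists_isPiCode_sorgLine
  obtain ⟨χ, hχ⟩ := exists_isPiCode_irrSorg
  obtain ⟨φ', hφ'⟩ := IsPiCode.exists_pi fun _ : Fin n => hφ
  obtain ⟨χ', hχ'⟩ := IsPiCode.exists_pi fun _ : Fin n => hχ
  exact ⟨hφ'.exists_isPiTree, hχ'.exists_isPiTree⟩
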